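/- Let N ≥ 3, let K ⊂ ℝ^N be a nonempty finite set of points, let p > 0, let γ ∈ (0,1), and let φ : (0,∞) → (0,∞) be locally γ-Hölder continuous and such that φ is monotone (either nonincreasing or nondecreasing) on [r₁,∞) for some r₁ > 0. Then the inequality −Δu ≥ φ(dist(x,K)) u^{−p} has a C² positive solution on ℝ^N \ K if and only if ∫₁^∞ r·φ(r) dr < ∞ and ∫₀¹ r^{(1+p)(N−2)+1} φ(r) dr < ∞. -/

import Mathlib

open Metric Set MeasureTheory Filter

noncomputable def laplacian {N : ℕ} (u : EuclideanSpace ℝ (Fin N) → ℝ)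
    (x : EuclideanSpace ℝ (Fin N)) : ℝ :=
  ∑ i, iteratedFDeriv ℝ 2 u x ![EuclideanSpace.single i 1, EuclideanSpace.single i 1]

lemma snd_deriv_nonneg {g g1 : ℝ → ℝ} {g2 : ℝ} (hmin : IsLocalMin g 0)
    (h1 : ∀ᶠ t in nhds (0:ℝ), HasDerivAt g (g1 t) t) (h2 : HasDerivAt g1 g2 0) : 0 ≤ g2 := by
  by_contra hneg
  push Not at hneg
  have hd : deriv g =ᶠ[nhds 0] g1 := by
    filter_upwards [h1] with t ht using ht.deriv
  have hdd : deriv (deriv g) 0 = g2 := by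
    rw [hd.deriv_eq, h2.deriv]
  have hmax : IsLocalMax g 0 :=
    isLocalMax_of_deriv_deriv_neg (by rw [hdd]; exact hneg) hmin.deriv_eq_zero
      h1.self_of_nhds.continuousAt
  have hconst : g =ᶠ[nhds 0] fun _ => g 0 := by
    filter_upwards [hmin, hmax] with t a b using le_antisymm b a
  have h3 : deriv g =ᶠ[nhds 0] fun _ => 0 := by
    have := hconst.deriv
    simpa using this
  have h4 : deriv (deriv g) 0 = 0 := by
    rw [h3.deriv_eq]; simp
  linarith

lemma iter2_nonneg {E : Type*} [NormedAddCommGroup E] [NormedSpace ℝ E] {v : E → ℝ} {x e : E}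
    (hv : ContDiffAt ℝ 2 v x) (hmin : IsLocalMin v x) :
    0 ≤ iteratedFDeriv ℝ 2 v x ![e, e] := by
  rw [iteratedFDeriv_two_apply]
  simp only [Matrix.cons_val_zero, Matrix.cons_val_one]
  have hline : ∀ t : ℝ, HasDerivAt (fun t : ℝ => x + t • e) e t := by
    intro t
    simpa using ((hasDerivAt_id t).smul_const e).const_add x
  have hc : Tendsto (fun t : ℝ => x + t • e) (nhds 0) (nhds x) := by
    have := (hline 0).continuousAt.tendsto
    simpa using this
  have hd1 : ∀ᶠ y in nhds x, DifferentiableAt ℝ v y := by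
    filter_upwards [hv.eventually (by simp)] with y hy using hy.differentiableAt (by simp)
  have hd2 : DifferentiableAt ℝ (fderiv ℝ v) x :=
    (hv.fderiv_right (m := 1) (by norm_num)).differentiableAt (by simp)
  refine snd_deriv_nonneg (g := fun t => v (x + t • e)) (g1 := fun t => fderiv ℝ v (x + t • e) e)
    ?_ ?_ ?_
  · have := hc.eventually hmin
    simpa [IsLocalMin, IsMinFilter] using this
  · filter_upwards [hc.eventually hd1] with t ht
    exact ht.hasFDerivAt.comp_hasDerivAt t (hline t)
  · have h0 : x = x + (0:ℝ) • e := by simp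
    have h3 : HasFDerivAt (fderiv ℝ v) (fderiv ℝ (fderiv ℝ v) x) (x + (0:ℝ) • e) := by
      rw [← h0]; exact hd2.hasFDerivAt
    have h4 := h3.comp_hasDerivAt (0:ℝ) (hline 0)
    exact ((ContinuousLinearMap.apply ℝ ℝ e).hasFDerivAt.comp_hasDerivAt (0:ℝ) h4)

lemma lap_nonneg {N : ℕ} {v : EuclideanSpace ℝ (Fin N) → ℝ} {x : EuclideanSpace ℝ (Fin N)}
    (hv : ContDiffAt ℝ 2 v x) (hmin : IsLocalMin v x) : 0 ≤ laplacian v x :=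
  Finset.sum_nonneg fun _ _ => iter2_nonneg hv hmin

lemma lap_sub {N : ℕ} {v w : EuclideanSpace ℝ (Fin N) → ℝ} {x : EuclideanSpace ℝ (Fin N)}
    (hv : ContDiffAt ℝ 2 v x) (hw : ContDiffAt ℝ 2 w x) :
    laplacian (fun y => v y - w y) x = laplacian v x - laplacian w x := by
  unfold laplacian
  have h := iteratedFDeriv_sub_apply (i := 2) hv hw
  have e : (fun y => v y - w y) = v - w := rfl
  rw [e, h, ← Finset.sum_sub_distrib]
  rfl

lemma lap_sum {N : ℕ} {ι : Type*} {f : ι → EuclideanSpace ℝ (Fin N) → ℝ} {s : Finset ι}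
    {x : EuclideanSpace ℝ (Fin N)} (h : ∀ j ∈ s, ContDiffAt ℝ 2 (f j) x) :
    laplacian (fun y => ∑ j ∈ s, f j y) x = ∑ j ∈ s, laplacian (f j) x := by
  unfold laplacian
  rw [iteratedFDeriv_fun_sum_apply (n := 2) h, Finset.sum_comm]
  simp

lemma hasFDerivAt_radial {E : Type*} [NormedAddCommGroup E] [InnerProductSpace ℝ E]
    {h : ℝ → ℝ} {h' : ℝ} {a y : E} (hy : y ≠ a) (hh : HasDerivAt h (‖y - a‖ * h') ‖y - a‖) :
    HasFDerivAt (fun y => h ‖y - a‖) (h' • innerSL ℝ (y - a)) y := by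
  have hpos : 0 < ‖y - a‖ := norm_pos_iff.2 (sub_ne_zero.2 hy)
  have h1 : HasFDerivAt (fun y : E => ‖y - a‖ ^ 2) (2 • innerSL ℝ (y - a)) y := by
    have := (((hasFDerivAt_id y).sub_const a).norm_sq)
    simpa using this
  have h2 := h1.sqrt (by positivity)
  have h3 : HasFDerivAt (fun y : E => ‖y - a‖) ((‖y - a‖)⁻¹ • innerSL ℝ (y - a)) y := by
    simp only [Real.sqrt_sq (norm_nonneg _)] at h2
    refine h2.congr_fderiv ?_
    ext v
    simp
    field_simp
  have h4 := hh.comp_hasFDerivAt y h3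
  refine h4.congr_fderiv ?_
  ext v
  simp
  field_simp

lemma lap_radial {N : ℕ} {h G : ℝ → ℝ} {G' : ℝ} {a x : EuclideanSpace ℝ (Fin N)} (hx : x ≠ a)
    (hh : ∀ r, 0 < r → HasDerivAt h (r * G r) r) (hG : HasDerivAt G G' ‖x - a‖) :
    laplacian (fun y => h ‖y - a‖) x = ‖x - a‖ * G' + N * G ‖x - a‖ := by
  have hpos : 0 < ‖x - a‖ := norm_pos_iff.2 (sub_ne_zero.2 hx)
  have h1 : fderiv ℝ (fun y => h ‖y - a‖) =ᶠ[nhds x]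
      fun y => G ‖y - a‖ • innerSL ℝ (y - a) := by
    filter_upwards [isOpen_ne.mem_nhds hx] with y hy
    exact (hasFDerivAt_radial hy (hh _ (norm_pos_iff.2 (sub_ne_zero.2 hy)))).fderiv
  have hG1 : HasFDerivAt (fun y => G ‖y - a‖) ((G' / ‖x - a‖) • innerSL ℝ (x - a)) x := by
    apply hasFDerivAt_radial hx
    convert hG using 1
    field_simp
  have hI : HasFDerivAt (fun y : EuclideanSpace ℝ (Fin N) => innerSL ℝ (y - a))
      (innerSL ℝ (E := EuclideanSpace ℝ (Fin N))) x := by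
    have := (innerSL ℝ (E := EuclideanSpace ℝ (Fin N))).hasFDerivAt (x := x - a)
    exact this.comp x ((hasFDerivAt_id x).sub_const a)
  have h2 := (hG1.smul hI).fderiv
  unfold laplacian
  have hterm : ∀ i : Fin N, iteratedFDeriv ℝ 2 (fun y => h ‖y - a‖) x
      ![EuclideanSpace.single i 1, EuclideanSpace.single i 1]
      = G ‖x - a‖ + (G' / ‖x - a‖) * ((x - a) i) ^ 2 := by
    intro i
    rw [iteratedFDeriv_two_apply, h1.fderiv_eq]
    simp only [Matrix.cons_val_zero, Matrix.cons_val_one]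
    have := congrArg (fun L => L (EuclideanSpace.single i (1:ℝ)) (EuclideanSpace.single i (1:ℝ))) h2
    refine this.trans ?_
    have hs : (innerSL ℝ (EuclideanSpace.single i (1:ℝ))) (EuclideanSpace.single i (1:ℝ))
        = (1:ℝ) := by
      rw [innerSL_apply_apply]
      simp
    simp [EuclideanSpace.inner_single_right]
    rw [hs]
    ring
  rw [Finset.sum_congr rfl fun i _ => hterm i, Finset.sum_add_distrib, ← Finset.mul_sum,
    ← EuclideanSpace.real_norm_sq_eq]
  simp
  field_simp
  ring

/-- first moment integral -/
noncomputable def Pf (n : ℕ) (Φ : ℝ → ℝ) (r : ℝ) : ℝ := ∫ t in (1:ℝ)..r, t ^ (n + 1) * Φ t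

/-- second moment integral -/
noncomputable def Qf (Φ : ℝ → ℝ) (r : ℝ) : ℝ := ∫ t in (1:ℝ)..r, t * Φ t

/-- radial solution of `Δ k = Φ` -/
noncomputable def kf (n : ℕ) (Φ : ℝ → ℝ) (r : ℝ) : ℝ := (Qf Φ r - (r ^ n)⁻¹ * Pf n Φ r) / n

/-- radial solution of `Δ h = -Φ` -/
noncomputable def hf (n : ℕ) (α β : ℝ) (Φ : ℝ → ℝ) (r : ℝ) : ℝ :=
  α + β * (r ^ n)⁻¹ - kf n Φ r

/-- derivative of the radial profile, divided by the radius -/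
noncomputable def Gf (n : ℕ) (β : ℝ) (Φ : ℝ → ℝ) (r : ℝ) : ℝ :=
  -(r ^ (n + 2))⁻¹ * (n * β + Pf n Φ r)

lemma uIcc_one_sub {r : ℝ} (hr : 0 < r) : uIcc 1 r ⊆ Ioi (0:ℝ) := by
  intro t ht
  have := ht.1
  exact lt_of_lt_of_le (lt_min one_pos hr) this

lemma ii_of_cont {f : ℝ → ℝ} (hf : ContinuousOn f (Ioi 0)) {a b : ℝ} (ha : 0 < a) (hb : 0 < b) :
    IntervalIntegrable f volume a b := by
  apply ContinuousOn.intervalIntegrable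
  apply hf.mono
  intro t ht
  exact lt_of_lt_of_le (lt_min ha hb) ht.1

lemma hasDerivAt_int {f : ℝ → ℝ} (hf : ContinuousOn f (Ioi 0)) {r : ℝ} (hr : 0 < r) :
    HasDerivAt (fun r => ∫ t in (1:ℝ)..r, f t) (f r) r := by
  apply intervalIntegral.integral_hasDerivAt_right (ii_of_cont hf one_pos hr)
  · exact hf.stronglyMeasurableAtFilter isOpen_Ioi r hr
  · exact hf.continuousAt (Ioi_mem_nhds hr)

lemma cont_pow_mul {Φ : ℝ → ℝ} (hΦ : ContinuousOn Φ (Ioi 0)) (m : ℕ) :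
    ContinuousOn (fun t => t ^ m * Φ t) (Ioi 0) := by fun_prop

lemma cont_id_mul {Φ : ℝ → ℝ} (hΦ : ContinuousOn Φ (Ioi 0)) :
    ContinuousOn (fun t => t * Φ t) (Ioi 0) := by fun_prop

lemma hasDerivAt_Pf (n : ℕ) {Φ : ℝ → ℝ} (hΦ : ContinuousOn Φ (Ioi 0)) {r : ℝ} (hr : 0 < r) :
    HasDerivAt (Pf n Φ) (r ^ (n + 1) * Φ r) r :=
  hasDerivAt_int (cont_pow_mul hΦ (n + 1)) hr

lemma hasDerivAt_Qf {Φ : ℝ → ℝ} (hΦ : ContinuousOn Φ (Ioi 0)) {r : ℝ} (hr : 0 < r) :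
    HasDerivAt (Qf Φ) (r * Φ r) r :=
  hasDerivAt_int (cont_id_mul hΦ) hr

lemma hasDerivAt_hf {n : ℕ} (hn : 1 ≤ n) (α β : ℝ) {Φ : ℝ → ℝ} (hΦ : ContinuousOn Φ (Ioi 0))
    {r : ℝ} (hr : 0 < r) : HasDerivAt (hf n α β Φ) (r * Gf n β Φ r) r := by
  obtain ⟨m, rfl⟩ : ∃ m, n = m + 1 := ⟨n - 1, by omega⟩
  have hi : HasDerivAt (fun r : ℝ => (r ^ (m + 1))⁻¹)
      (-(((m + 1 : ℕ) : ℝ) * r ^ m) / (r ^ (m + 1)) ^ 2) r := by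
    have := (hasDerivAt_pow (m + 1) r).inv (pow_ne_zero _ hr.ne')
    exact HasDerivAt.congr_deriv this (by simp)
  have h := ((hi.const_mul β).const_add α).sub
    (((hasDerivAt_Qf hΦ hr).sub (hi.mul (hasDerivAt_Pf (m + 1) hΦ hr))).div_const ((m + 1 : ℕ) : ℝ))
  refine HasDerivAt.congr_deriv h ?_
  have : ((m : ℝ) + 1) ≠ 0 := by positivity
  unfold Gf
  push_cast
  field_simp
  ring

lemma hasDerivAt_Gf (n : ℕ) (β : ℝ) {Φ : ℝ → ℝ} (hΦ : ContinuousOn Φ (Ioi 0))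
    {r : ℝ} (hr : 0 < r) : HasDerivAt (Gf n β Φ)
      ((n + 2) * (r ^ (n + 3))⁻¹ * (n * β + Pf n Φ r) - r⁻¹ * Φ r) r := by
  have hi : HasDerivAt (fun r : ℝ => -(r ^ (n + 2))⁻¹)
      (-(-(((n + 2 : ℕ) : ℝ) * r ^ (n + 1)) / (r ^ (n + 2)) ^ 2)) r := by
    have := ((hasDerivAt_pow (n + 2) r).inv (pow_ne_zero _ hr.ne')).neg
    exact HasDerivAt.congr_deriv this (by simp)
  have h := hi.mul ((hasDerivAt_Pf n hΦ hr).const_add (n * β))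
  refine HasDerivAt.congr_deriv h ?_
  push_cast
  field_simp
  ring

lemma contDiffOn_Pf (n : ℕ) {Φ : ℝ → ℝ} (hΦ : ContinuousOn Φ (Ioi 0)) :
    ContDiffOn ℝ 1 (Pf n Φ) (Ioi 0) := by
  have h : ContDiffOn ℝ (0 + 1) (Pf n Φ) (Ioi 0) := by
    rw [contDiffOn_succ_iff_deriv_of_isOpen isOpen_Ioi]
    refine ⟨fun r hr => (hasDerivAt_Pf n hΦ hr).differentiableAt.differentiableWithinAt,
      by simp, ?_⟩
    rw [contDiffOn_zero]
    exact (cont_pow_mul hΦ (n + 1)).congr fun r hr => (hasDerivAt_Pf n hΦ hr).deriv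
  simpa using h

lemma contDiffOn_hf {n : ℕ} (hn : 1 ≤ n) (α β : ℝ) {Φ : ℝ → ℝ} (hΦ : ContinuousOn Φ (Ioi 0)) :
    ContDiffOn ℝ 2 (hf n α β Φ) (Ioi 0) := by
  have h : ContDiffOn ℝ (1 + 1) (hf n α β Φ) (Ioi 0) := by
    rw [contDiffOn_succ_iff_deriv_of_isOpen isOpen_Ioi]
    refine ⟨fun r hr => (hasDerivAt_hf hn α β hΦ hr).differentiableAt.differentiableWithinAt,
      by simp, ?_⟩
    have h2 : ContDiffOn ℝ 1 (fun r => r * Gf n β Φ r) (Ioi 0) := by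
      unfold Gf
      refine contDiffOn_id.mul (ContDiffOn.mul (ContDiffOn.neg (ContDiffOn.inv (by fun_prop) ?_))
        (contDiffOn_const.add (contDiffOn_Pf n hΦ)))
      intro r hr
      exact pow_ne_zero _ (ne_of_gt hr)
    exact h2.congr fun r hr => (hasDerivAt_hf hn α β hΦ hr).deriv
  have e : (1 + 1 : WithTop ℕ∞) = 2 := by norm_num
  rwa [e] at h

lemma contDiffAt_hf {n N : ℕ} (hn : 1 ≤ n) (α β : ℝ) {Φ : ℝ → ℝ} (hΦ : ContinuousOn Φ (Ioi 0))
    {a x : EuclideanSpace ℝ (Fin N)} (hx : x ≠ a) :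
    ContDiffAt ℝ 2 (fun y => hf n α β Φ ‖y - a‖) x := by
  have hpos : 0 < ‖x - a‖ := norm_pos_iff.2 (sub_ne_zero.2 hx)
  have h1 := (contDiffOn_hf hn α β hΦ).contDiffAt (Ioi_mem_nhds hpos)
  have h2 : ContDiffAt ℝ 2 (fun y => ‖y - a‖) x :=
    (contDiffAt_id.sub contDiffAt_const).norm ℝ (sub_ne_zero.2 hx)
  exact h1.comp x h2

lemma lap_hf {n : ℕ} (hn : 1 ≤ n) (α β : ℝ) {Φ : ℝ → ℝ} (hΦ : ContinuousOn Φ (Ioi 0))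
    {a x : EuclideanSpace ℝ (Fin (n + 2))} (hx : x ≠ a) :
    laplacian (fun y => hf n α β Φ ‖y - a‖) x = -Φ ‖x - a‖ := by
  have hpos : 0 < ‖x - a‖ := norm_pos_iff.2 (sub_ne_zero.2 hx)
  rw [lap_radial hx (fun r hr => hasDerivAt_hf hn α β hΦ hr) (hasDerivAt_Gf n β hΦ hpos)]
  unfold Gf
  push_cast
  field_simp
  ring

lemma kf_eq {n : ℕ} {Φ : ℝ → ℝ} (hΦ : ContinuousOn Φ (Ioi 0)) {r : ℝ} (hr : 0 < r) :
    kf n Φ r = (∫ t in (1:ℝ)..r, (t - (r ^ n)⁻¹ * t ^ (n + 1)) * Φ t) / n := by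
  unfold kf Qf Pf
  rw [← intervalIntegral.integral_const_mul, ← intervalIntegral.integral_sub
    (ii_of_cont (cont_id_mul hΦ) one_pos hr)
    ((ii_of_cont (cont_pow_mul hΦ (n + 1)) one_pos hr).const_mul _)]
  congr 2
  ext t
  ring

lemma ker_eq {n : ℕ} {r t : ℝ} (hr : 0 < r) :
    t - (r ^ n)⁻¹ * t ^ (n + 1) = t * (r ^ n)⁻¹ * (r ^ n - t ^ n) := by
  field_simp
  ring

lemma kf_nonneg {n : ℕ} {Φ : ℝ → ℝ} (hΦ : ContinuousOn Φ (Ioi 0)) (hpos : ∀ t, 0 < t → 0 ≤ Φ t)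
    {r : ℝ} (hr : 0 < r) : 0 ≤ kf n Φ r := by
  rw [kf_eq hΦ hr]
  apply div_nonneg _ (Nat.cast_nonneg _)
  rcases le_total 1 r with h | h
  · apply intervalIntegral.integral_nonneg h
    intro t ht
    have ht0 : 0 < t := by linarith [ht.1]
    have : t ^ n ≤ r ^ n := pow_le_pow_left₀ ht0.le ht.2 n
    have h3 : 0 ≤ t * (r ^ n)⁻¹ * (r ^ n - t ^ n) :=
      mul_nonneg (by positivity) (by linarith)
    rw [ker_eq hr]
    exact mul_nonneg h3 (hpos t ht0)
  · rw [intervalIntegral.integral_symm, ← intervalIntegral.integral_neg]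
    apply intervalIntegral.integral_nonneg h
    intro t ht
    have ht0 : 0 < t := by linarith [ht.1]
    have : r ^ n ≤ t ^ n := pow_le_pow_left₀ hr.le ht.1 n
    have h3 : 0 ≤ t * (r ^ n)⁻¹ * (t ^ n - r ^ n) :=
      mul_nonneg (by positivity) (by linarith)
    rw [ker_eq hr]
    have := mul_nonneg h3 (hpos t ht0)
    linarith

/-- comparison principle on an annulus -/
lemma compare {n : ℕ} (hn : 1 ≤ n) {u : EuclideanSpace ℝ (Fin (n + 2)) → ℝ}
    {a : EuclideanSpace ℝ (Fin (n + 2))} {r1 r2 : ℝ} (h1 : 0 < r1)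
    (hu : ∀ x, r1 ≤ ‖x - a‖ → ‖x - a‖ ≤ r2 → ContDiffAt ℝ 2 u x)
    (α β : ℝ) {Φ : ℝ → ℝ} (hΦ : ContinuousOn Φ (Ioi 0))
    (hb1 : ∀ x, ‖x - a‖ = r1 → hf n α β Φ r1 ≤ u x)
    (hb2 : ∀ x, ‖x - a‖ = r2 → hf n α β Φ r2 ≤ u x)
    (hs : ∀ x, r1 < ‖x - a‖ → ‖x - a‖ < r2 → (∀ y, ‖y - a‖ = ‖x - a‖ → u x ≤ u y) →
      laplacian u x < -Φ ‖x - a‖) (x : EuclideanSpace ℝ (Fin (n + 2)))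
    (hx1 : r1 ≤ ‖x - a‖) (hx2 : ‖x - a‖ ≤ r2) : hf n α β Φ ‖x - a‖ ≤ u x := by
  set S : Set (EuclideanSpace ℝ (Fin (n + 2))) := (fun y => ‖y - a‖) ⁻¹' Icc r1 r2 with hS
  have hnc : Continuous (fun y : EuclideanSpace ℝ (Fin (n + 2)) => ‖y - a‖) := by fun_prop
  have hne : ∀ y, r1 ≤ ‖y - a‖ → y ≠ a := by
    rintro y hy rfl
    simp at hy
    linarith
  have hcl : IsClosed S := isClosed_Icc.preimage hnc
  have hcomp : IsCompact S := by
    apply (isCompact_closedBall a r2).of_isClosed_subset hcl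
    intro y hy
    rw [mem_closedBall, dist_eq_norm]
    exact hy.2
  have hcont : ContinuousOn (fun y => u y - hf n α β Φ ‖y - a‖) S := by
    intro y hy
    exact ((hu y hy.1 hy.2).sub (contDiffAt_hf hn α β hΦ (hne y hy.1))).continuousAt.continuousWithinAt
  obtain ⟨x0, hx0, hmin⟩ := hcomp.exists_isMinOn ⟨x, hx1, hx2⟩ hcont
  have hx01 : r1 ≤ ‖x0 - a‖ := hx0.1
  have hx02 : ‖x0 - a‖ ≤ r2 := hx0.2
  have key : 0 ≤ u x0 - hf n α β Φ ‖x0 - a‖ := by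
    rcases hx01.eq_or_lt with e | l1
    · have := hb1 x0 e.symm
      rw [← e]; linarith
    rcases hx02.eq_or_lt with e | l2
    · have := hb2 x0 e
      rw [e]; linarith
    exfalso
    have hu0 := hu x0 hx0.1 hx0.2
    have hw0 := contDiffAt_hf hn α β hΦ (hne x0 hx0.1)
    have hloc : IsLocalMin (fun y => u y - hf n α β Φ ‖y - a‖) x0 := by
      apply hmin.isLocalMin
      have ho : IsOpen ((fun y : EuclideanSpace ℝ (Fin (n + 2)) => ‖y - a‖) ⁻¹' Ioo r1 r2) :=
        isOpen_Ioo.preimage hnc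
      filter_upwards [ho.mem_nhds ⟨l1, l2⟩] with y hy using ⟨hy.1.le, hy.2.le⟩
    have h0 := lap_nonneg (hu0.sub hw0) hloc
    rw [lap_sub hu0 hw0, lap_hf hn α β hΦ (hne x0 hx0.1)] at h0
    have := hs x0 l1 l2 (by
      intro y hy
      have hyS : y ∈ S := ⟨hx01.trans_eq hy.symm, hy.trans_le hx02⟩
      have := hmin hyS
      simp only [mem_ofPred_eq] at this
      rw [hy] at this
      linarith)
    linarith
  have := hmin (show x ∈ S from ⟨hx1, hx2⟩)
  simp only [mem_ofPred_eq] at this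
  linarith

lemma int_zero {n : ℕ} (hn : 1 ≤ n) {Φ : ℝ → ℝ} (hΦ : ContinuousOn Φ (Ioi 0))
    (hpos : ∀ t, 0 < t → 0 ≤ Φ t) {M r0 : ℝ} (hr0 : 0 < r0)
    (hk : ∀ r, 0 < r → r < r0 → kf n Φ r ≤ M * (r ^ n)⁻¹) :
    IntegrableOn (fun t => t ^ (n + 1) * Φ t) (Ioc 0 1) := by
  have hn0 : (0:ℝ) < n := by exact_mod_cast hn
  have hcP := cont_pow_mul hΦ (n + 1)
  have main : ∀ r, 0 < r → r < r0 → 2 * r ≤ 1 →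
      ∫ t in (2 * r)..1, t ^ (n + 1) * Φ t ≤ 2 * n * M := by
    intro r hr hrr hr1
    have h2r : 0 < 2 * r := by linarith
    have h1 := hk r hr hrr
    rw [kf_eq hΦ hr, div_le_iff₀ hn0, intervalIntegral.integral_symm,
      ← intervalIntegral.integral_neg] at h1
    have hc : ContinuousOn (fun t => -((t - (r ^ n)⁻¹ * t ^ (n + 1)) * Φ t)) (Ioi 0) := by
      fun_prop
    rw [← intervalIntegral.integral_add_adjacent_intervals (ii_of_cont hc hr h2r)
      (ii_of_cont hc h2r one_pos)] at h1
    have ha : 0 ≤ ∫ t in r..(2 * r), -((t - (r ^ n)⁻¹ * t ^ (n + 1)) * Φ t) := by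
      apply intervalIntegral.integral_nonneg (by linarith)
      intro t ht
      have ht0 : 0 < t := by linarith [ht.1]
      have : r ^ n ≤ t ^ n := pow_le_pow_left₀ hr.le ht.1 n
      have h3 : 0 ≤ t * (r ^ n)⁻¹ * (t ^ n - r ^ n) :=
        mul_nonneg (by positivity) (by linarith)
      rw [ker_eq hr]
      have := mul_nonneg h3 (hpos t ht0)
      linarith
    have hb : ∫ t in (2 * r)..1, ((r ^ n)⁻¹ / 2) * (t ^ (n + 1) * Φ t) ≤
        ∫ t in (2 * r)..1, -((t - (r ^ n)⁻¹ * t ^ (n + 1)) * Φ t) := by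
      apply intervalIntegral.integral_mono_on hr1
        ((ii_of_cont hcP h2r one_pos).const_mul _) (ii_of_cont hc h2r one_pos)
      intro t ht
      have ht0 : 0 < t := by linarith [ht.1]
      have h4 : (2 * r) ^ n ≤ t ^ n := pow_le_pow_left₀ h2r.le ht.1 n
      have h5 : (2:ℝ) * r ^ n ≤ (2 * r) ^ n := by
        rw [mul_pow]
        apply mul_le_mul_of_nonneg_right _ (by positivity)
        calc (2:ℝ) = 2 ^ 1 := by norm_num
          _ ≤ 2 ^ n := pow_le_pow_right₀ (by norm_num) hn
      have h3 : 0 ≤ t * (r ^ n)⁻¹ * (t ^ n - 2 * r ^ n) :=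
        mul_nonneg (by positivity) (by linarith)
      have h6 := mul_nonneg h3 (hpos t ht0)
      have h7 : t * (r ^ n)⁻¹ * (t ^ n - 2 * r ^ n) = (r ^ n)⁻¹ * t ^ (n + 1) - 2 * t := by
        field_simp
        ring
      rw [h7] at h6
      linarith
    rw [intervalIntegral.integral_const_mul] at hb
    have h8 : (r ^ n)⁻¹ / 2 * ∫ t in (2 * r)..1, t ^ (n + 1) * Φ t ≤
        (r ^ n)⁻¹ / 2 * (2 * n * M) := by linarith
    exact le_of_mul_le_mul_left h8 (by positivity)
  have hb : Tendsto (fun i : ℕ => 2 * (1 / ((i:ℝ) + 1))) atTop (nhds 0) := by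
    simpa using (tendsto_one_div_add_atTop_nhds_zero_nat (𝕜 := ℝ)).const_mul 2
  refine integrableOn_Ioc_of_intervalIntegral_norm_bounded_left (I := 2 * n * M)
    (a := fun i : ℕ => 2 * (1 / ((i:ℝ) + 1))) (l := atTop) ?_ hb ?_
  · intro i
    exact (ii_of_cont hcP (by positivity) one_pos).1
  · have e1 : ∀ᶠ i : ℕ in atTop, 2 * (1 / ((i:ℝ) + 1)) < min 1 r0 :=
      hb.eventually (Iio_mem_nhds (lt_min one_pos hr0))
    filter_upwards [e1] with i hi
    have hi1 := lt_of_lt_of_le hi (min_le_left _ _)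
    have hi2 := lt_of_lt_of_le hi (min_le_right _ _)
    have hp : 0 < 1 / ((i:ℝ) + 1) := by positivity
    rw [← intervalIntegral.integral_of_le hi1.le]
    refine le_trans (le_of_eq ?_) (main _ hp (by linarith) hi1.le)
    apply intervalIntegral.integral_congr
    intro t ht
    rw [uIcc_of_le hi1.le] at ht
    have ht0 : 0 < t := lt_of_lt_of_le (by positivity) ht.1
    exact Real.norm_of_nonneg (mul_nonneg (by positivity) (hpos t ht0))

lemma int_inf {n : ℕ} (hn : 1 ≤ n) {Φ : ℝ → ℝ} (hΦ : ContinuousOn Φ (Ioi 0))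
    (hpos : ∀ t, 0 < t → 0 ≤ Φ t) {M r0 : ℝ}
    (hk : ∀ r, r0 < r → kf n Φ r ≤ M) :
    IntegrableOn (fun t => t * Φ t) (Ioi 1) := by
  have hn0 : (0:ℝ) < n := by exact_mod_cast hn
  have hcP := cont_id_mul hΦ
  have main : ∀ s, 1 ≤ s → r0 < 2 * s →
      ∫ t in (1:ℝ)..s, t * Φ t ≤ 2 * n * M := by
    intro s hs hrr
    have hs0 : 0 < s := by linarith
    have hr : 0 < 2 * s := by linarith
    have h1 := hk (2 * s) hrr
    rw [kf_eq hΦ hr, div_le_iff₀ hn0] at h1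
    have hc : ContinuousOn (fun t => ((t - ((2 * s) ^ n)⁻¹ * t ^ (n + 1)) * Φ t)) (Ioi 0) := by
      fun_prop
    rw [← intervalIntegral.integral_add_adjacent_intervals (ii_of_cont hc one_pos hs0)
      (ii_of_cont hc hs0 hr)] at h1
    have ha : 0 ≤ ∫ t in s..(2 * s), ((t - ((2 * s) ^ n)⁻¹ * t ^ (n + 1)) * Φ t) := by
      apply intervalIntegral.integral_nonneg (by linarith)
      intro t ht
      have ht0 : 0 < t := by linarith [ht.1]
      have : t ^ n ≤ (2 * s) ^ n := pow_le_pow_left₀ ht0.le ht.2 n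
      have h3 : 0 ≤ t * ((2 * s) ^ n)⁻¹ * ((2 * s) ^ n - t ^ n) :=
        mul_nonneg (by positivity) (by linarith)
      rw [ker_eq hr]
      exact mul_nonneg h3 (hpos t ht0)
    have hb : ∫ t in (1:ℝ)..s, (1 / 2 : ℝ) * (t * Φ t) ≤
        ∫ t in (1:ℝ)..s, ((t - ((2 * s) ^ n)⁻¹ * t ^ (n + 1)) * Φ t) := by
      apply intervalIntegral.integral_mono_on hs
        ((ii_of_cont hcP one_pos hs0).const_mul _) (ii_of_cont hc one_pos hs0)
      intro t ht
      have ht0 : 0 < t := by linarith [ht.1]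
      have h4 : t ^ n ≤ s ^ n := pow_le_pow_left₀ ht0.le ht.2 n
      have h5 : (2:ℝ) * s ^ n ≤ (2 * s) ^ n := by
        rw [mul_pow]
        apply mul_le_mul_of_nonneg_right _ (by positivity)
        calc (2:ℝ) = 2 ^ 1 := by norm_num
          _ ≤ 2 ^ n := pow_le_pow_right₀ (by norm_num) hn
      have h3 : 0 ≤ t * ((2 * s) ^ n)⁻¹ * ((2 * s) ^ n - 2 * t ^ n) :=
        mul_nonneg (by positivity) (by linarith)
      have h6 := mul_nonneg h3 (hpos t ht0)
      have h7 : t * ((2 * s) ^ n)⁻¹ * ((2 * s) ^ n - 2 * t ^ n)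
          = t - 2 * (((2 * s) ^ n)⁻¹ * t ^ (n + 1)) := by
        field_simp
        ring
      rw [h7] at h6
      linarith
    rw [intervalIntegral.integral_const_mul] at hb
    linarith
  have hb : Tendsto (fun i : ℕ => (i:ℝ)) atTop atTop := tendsto_natCast_atTop_atTop
  refine integrableOn_Ioi_of_intervalIntegral_norm_bounded (2 * n * M) 1 (l := atTop)
    (b := fun i : ℕ => (i:ℝ) + 1) ?_ (tendsto_atTop_add_const_right _ _ hb) ?_
  · intro i
    exact (ii_of_cont hcP one_pos (by positivity)).1
  · filter_upwards [hb.eventually_gt_atTop r0] with i hi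
    have h1 : (1:ℝ) ≤ (i:ℝ) + 1 := by
      have : (0:ℝ) ≤ i := Nat.cast_nonneg i
      linarith
    refine le_trans (le_of_eq ?_) (main ((i:ℝ) + 1) h1 (by linarith))
    apply intervalIntegral.integral_congr
    intro t ht
    rw [uIcc_of_le h1] at ht
    have ht0 : 0 < t := lt_of_lt_of_le one_pos ht.1
    exact Real.norm_of_nonneg (mul_nonneg (by positivity) (hpos t ht0))

lemma exists_sphere {n : ℕ} (a : EuclideanSpace ℝ (Fin (n + 2))) {r : ℝ} (hr : 0 ≤ r) :
    ∃ x, ‖x - a‖ = r := by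
  obtain ⟨x, hx⟩ := (NormedSpace.sphere_nonempty (x := a) (r := r)).2 hr
  exact ⟨x, by simpa [dist_eq_norm] using hx⟩

lemma zero_bound {n : ℕ} (hn : 1 ≤ n) {u : EuclideanSpace ℝ (Fin (n + 2)) → ℝ}
    {a : EuclideanSpace ℝ (Fin (n + 2))} {ρ : ℝ} (hρ : 0 < ρ)
    (hu : ∀ x, 0 < ‖x - a‖ → ‖x - a‖ ≤ ρ → ContDiffAt ℝ 2 u x ∧ 0 < u x)
    {Φ : ℝ → ℝ} (hΦ : ContinuousOn Φ (Ioi 0)) (hpos : ∀ t, 0 < t → 0 ≤ Φ t)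
    (hs : ∀ x, 0 < ‖x - a‖ → ‖x - a‖ < ρ → (∀ y, ‖y - a‖ = ‖x - a‖ → u x ≤ u y) →
      laplacian u x < -Φ ‖x - a‖) :
    ∃ M, 0 < M ∧ ∀ r, 0 < r → r < ρ / 2 → ∃ x, ‖x - a‖ = r ∧ u x + kf n Φ r ≤ M * (r ^ n)⁻¹ := by
  obtain ⟨x', hx'⟩ := exists_sphere a (r := ρ / 2) (by positivity)
  have hD : 0 < ((ρ / 2) ^ n)⁻¹ - (ρ ^ n)⁻¹ := by
    have h1 : (ρ / 2) ^ n < ρ ^ n :=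
      pow_lt_pow_left₀ (by linarith) (by positivity) (by omega)
    have := inv_strictAnti₀ (by positivity) h1
    linarith
  set D := ((ρ / 2) ^ n)⁻¹ - (ρ ^ n)⁻¹ with hDdef
  have hu' := (hu x' (by rw [hx']; positivity) (by rw [hx']; linarith)).2
  have hk' := kf_nonneg (n := n) hΦ hpos (r := ρ / 2) (by positivity)
  set M := (u x' + kf n Φ (ρ / 2)) / D + 1 with hM
  have hMpos : 0 < M := by positivity
  refine ⟨M, hMpos, fun r hr hr2 => ?_⟩
  by_contra hcon
  push Not at hcon
  have hc := compare hn (u := u) (a := a) (r1 := r) (r2 := ρ) hr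
    (fun x h1 h2 => (hu x (by linarith) h2).1) (-M * (ρ ^ n)⁻¹) M hΦ
    (by
      intro x hx
      have := hcon x hx
      have h2 : 0 ≤ M * (ρ ^ n)⁻¹ := by positivity
      unfold hf
      linarith)
    (by
      intro x hx
      have := (hu x (by rw [hx]; exact hρ) hx.le).2
      have h2 := kf_nonneg (n := n) hΦ hpos hρ
      unfold hf
      linarith)
    (fun x h1 h2 h3 => hs x (by linarith) h2 h3) x' (by rw [hx']; exact hr2.le)
    (by rw [hx']; linarith)
  rw [hx'] at hc
  unfold hf at hc
  have h5 : M * D ≤ u x' + kf n Φ (ρ / 2) := by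
    rw [hDdef]; linarith
  have h6 : M * D = u x' + kf n Φ (ρ / 2) + D := by
    rw [hM]; field_simp
  linarith

lemma inf_bound {n : ℕ} (hn : 1 ≤ n) {u : EuclideanSpace ℝ (Fin (n + 2)) → ℝ}
    {a : EuclideanSpace ℝ (Fin (n + 2))} {ρ : ℝ} (hρ : 0 < ρ)
    (hu : ∀ x, ρ ≤ ‖x - a‖ → ContDiffAt ℝ 2 u x ∧ 0 < u x)
    {Φ : ℝ → ℝ} (hΦ : ContinuousOn Φ (Ioi 0)) (hpos : ∀ t, 0 < t → 0 ≤ Φ t)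
    (hs : ∀ x, ρ < ‖x - a‖ → (∀ y, ‖y - a‖ = ‖x - a‖ → u x ≤ u y) →
      laplacian u x < -Φ ‖x - a‖) :
    ∃ M, 0 < M ∧ ∀ r, 2 * ρ < r → ∃ x, ‖x - a‖ = r ∧ u x + kf n Φ r ≤ M := by
  obtain ⟨x', hx'⟩ := exists_sphere a (r := 2 * ρ) (by positivity)
  have hD : 0 < 1 - ρ ^ n * ((2 * ρ) ^ n)⁻¹ := by
    have h1 : ρ ^ n < (2 * ρ) ^ n :=
      pow_lt_pow_left₀ (by linarith) (by positivity) (by omega)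
    have : ρ ^ n * ((2 * ρ) ^ n)⁻¹ < 1 := by
      rw [← div_eq_mul_inv, div_lt_one (by positivity)]
      exact h1
    linarith
  set D := 1 - ρ ^ n * ((2 * ρ) ^ n)⁻¹ with hDdef
  have hu' := (hu x' (by rw [hx']; linarith)).2
  have hk' := kf_nonneg (n := n) hΦ hpos (r := 2 * ρ) (by positivity)
  set M := (u x' + kf n Φ (2 * ρ)) / D + 1 with hM
  have hMpos : 0 < M := by positivity
  refine ⟨M, hMpos, fun r hr2 => ?_⟩
  have hr : 0 < r := by linarith
  by_contra hcon
  push Not at hcon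
  have hc := compare hn (u := u) (a := a) (r1 := ρ) (r2 := r) hρ
    (fun x h1 h2 => (hu x h1).1) M (-(M * ρ ^ n)) hΦ
    (by
      intro x hx
      have := (hu x hx.ge).2
      have h2 := kf_nonneg (n := n) hΦ hpos hρ
      have h3 : -(M * ρ ^ n) * (ρ ^ n)⁻¹ = -M := by field_simp
      unfold hf
      rw [h3]
      linarith)
    (by
      intro x hx
      have := hcon x hx
      have h2 : 0 ≤ M * ρ ^ n * (r ^ n)⁻¹ := by positivity
      unfold hf
      linarith)
    (fun x h1 h2 h3 => hs x h1 h3) x' (by rw [hx']; linarith)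
    (by rw [hx']; exact hr2.le)
  rw [hx'] at hc
  unfold hf at hc
  have h5 : M * D ≤ u x' + kf n Φ (2 * ρ) := by
    rw [hDdef]; linarith
  have h6 : M * D = u x' + kf n Φ (2 * ρ) + D := by
    rw [hM]; field_simp
  linarith

lemma inv_pow_rpow {r : ℝ} (hr : 0 < r) (n : ℕ) (p : ℝ) :
    ((r ^ n)⁻¹) ^ (-p) = r ^ (p * n) := by
  rw [Real.inv_rpow (by positivity), Real.rpow_neg (by positivity), inv_inv,
    ← Real.rpow_natCast_mul hr.le, mul_comm p]

lemma kf_zero (n : ℕ) (r : ℝ) : kf n (fun _ => 0) r = 0 := by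
  simp [kf, Qf, Pf]

lemma nec_zero {n : ℕ} (hn : 1 ≤ n) {u : EuclideanSpace ℝ (Fin (n + 2)) → ℝ}
    {a : EuclideanSpace ℝ (Fin (n + 2))} {ρ p : ℝ} (hρ : 0 < ρ) (hp : 0 < p)
    {φ : ℝ → ℝ} (hφ : ContinuousOn φ (Ioi 0)) (hφpos : ∀ t, 0 < t → 0 < φ t)
    (hu : ∀ x, 0 < ‖x - a‖ → ‖x - a‖ ≤ ρ → ContDiffAt ℝ 2 u x ∧ 0 < u x)
    (hlap : ∀ x, 0 < ‖x - a‖ → ‖x - a‖ ≤ ρ → φ ‖x - a‖ * u x ^ (-p) ≤ -laplacian u x) :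
    IntegrableOn (fun t => t ^ (n + 1) * (φ t * t ^ (p * n))) (Ioc 0 1) := by
  obtain ⟨M, hM, hM1⟩ := zero_bound hn hρ hu (Φ := fun _ => 0) continuousOn_const
    (fun _ _ => le_rfl) (by
      intro x h1 h2 _
      have h3 := hlap x h1 h2.le
      have h4 := hφpos _ h1
      have h5 := (hu x h1 h2.le).2
      have h6 : 0 < φ ‖x - a‖ * u x ^ (-p) := by positivity
      simp only [neg_zero]
      linarith)
  simp only [kf_zero, add_zero] at hM1
  have hrp : ContinuousOn (fun t : ℝ => t ^ (p * n)) (Ioi 0) :=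
    continuousOn_id.rpow_const fun t ht => Or.inl (ne_of_gt ht)
  have hΦ : ContinuousOn (fun t => M ^ (-p) / 2 * (φ t * t ^ (p * n))) (Ioi 0) := by
    fun_prop
  have hΦpos : ∀ t : ℝ, 0 < t → 0 ≤ M ^ (-p) / 2 * (φ t * t ^ (p * n)) := by
    intro t ht
    have := hφpos t ht
    positivity
  obtain ⟨M', hM', hM2⟩ := zero_bound hn (ρ := ρ / 2) (by positivity)
    (fun x h1 h2 => hu x h1 (by linarith)) hΦ hΦpos (by
      intro x h1 h2 hmin
      have h3 := hlap x h1 (by linarith)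
      have h4 := hφpos _ h1
      have h5 := (hu x h1 (by linarith)).2
      obtain ⟨y, hy, hy1⟩ := hM1 _ h1 h2
      have h6 := (hmin y hy).trans hy1
      have h7 : (M * (‖x - a‖ ^ n)⁻¹) ^ (-p) ≤ u x ^ (-p) :=
        Real.rpow_le_rpow_of_nonpos h5 h6 (by linarith)
      have h8 : (M * (‖x - a‖ ^ n)⁻¹) ^ (-p) = M ^ (-p) * ‖x - a‖ ^ (p * n) := by
        rw [Real.mul_rpow hM.le (by positivity), inv_pow_rpow h1]
      rw [h8] at h7
      have h9 : φ ‖x - a‖ * (M ^ (-p) * ‖x - a‖ ^ (p * n)) ≤ φ ‖x - a‖ * u x ^ (-p) :=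
        mul_le_mul_of_nonneg_left h7 h4.le
      have h10 : 0 < φ ‖x - a‖ * (M ^ (-p) * ‖x - a‖ ^ (p * n)) := by positivity
      linarith)
  have := int_zero hn hΦ hΦpos (M := M') (r0 := ρ / 2 / 2) (by positivity) (by
    intro r hr hr2
    obtain ⟨x, hx, hx1⟩ := hM2 r hr hr2
    have := (hu x (by rw [hx]; exact hr) (by rw [hx]; linarith)).2
    linarith)
  have h2 := this.const_mul (2 * M ^ p)
  refine IntegrableOn.congr_fun h2 ?_ measurableSet_Ioc
  intro t ht
  have : M ^ (-p) * M ^ p = 1 := by rw [← Real.rpow_add hM]; simp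
  simp only
  linear_combination (t ^ (n + 1) * (φ t * t ^ (p * n))) * this

lemma nec_inf {n : ℕ} (hn : 1 ≤ n) {u : EuclideanSpace ℝ (Fin (n + 2)) → ℝ}
    {a : EuclideanSpace ℝ (Fin (n + 2))} {ρ p : ℝ} (hρ : 0 < ρ) (hp : 0 < p)
    {φ : ℝ → ℝ} (hφ : ContinuousOn φ (Ioi 0)) (hφpos : ∀ t, 0 < t → 0 < φ t)
    (hu : ∀ x, ρ ≤ ‖x - a‖ → ContDiffAt ℝ 2 u x ∧ 0 < u x)
    (hlap : ∀ x, ρ ≤ ‖x - a‖ → φ ‖x - a‖ * u x ^ (-p) ≤ -laplacian u x) :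
    IntegrableOn (fun t => t * φ t) (Ioi 1) := by
  obtain ⟨M, hM, hM1⟩ := inf_bound hn hρ hu (Φ := fun _ => 0) continuousOn_const
    (fun _ _ => le_rfl) (by
      intro x h1 _
      have h3 := hlap x h1.le
      have h4 := hφpos ‖x - a‖ (by linarith)
      have h5 := (hu x h1.le).2
      have h6 : 0 < φ ‖x - a‖ * u x ^ (-p) := by positivity
      simp only [neg_zero]
      linarith)
  simp only [kf_zero, add_zero] at hM1
  have hΦ : ContinuousOn (fun t => M ^ (-p) / 2 * φ t) (Ioi 0) := by
    fun_prop
  have hΦpos : ∀ t : ℝ, 0 < t → 0 ≤ M ^ (-p) / 2 * φ t := by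
    intro t ht
    have := hφpos t ht
    positivity
  obtain ⟨M', hM', hM2⟩ := inf_bound hn (ρ := 2 * ρ) (by positivity)
    (fun x h1 => hu x (by linarith)) hΦ hΦpos (by
      intro x h1 hmin
      have h3 := hlap x (by linarith)
      have h4 := hφpos ‖x - a‖ (by linarith)
      have h5 := (hu x (by linarith)).2
      obtain ⟨y, hy, hy1⟩ := hM1 _ h1
      have h6 := (hmin y hy).trans hy1
      have h7 : M ^ (-p) ≤ u x ^ (-p) :=
        Real.rpow_le_rpow_of_nonpos h5 h6 (by linarith)
      have h9 : φ ‖x - a‖ * M ^ (-p) ≤ φ ‖x - a‖ * u x ^ (-p) :=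
        mul_le_mul_of_nonneg_left h7 h4.le
      have h10 : 0 < φ ‖x - a‖ * M ^ (-p) := by positivity
      linarith)
  have := int_inf hn hΦ hΦpos (M := M') (r0 := 2 * (2 * ρ)) (by
    intro r hr2
    obtain ⟨x, hx, hx1⟩ := hM2 r hr2
    have := (hu x (by rw [hx]; linarith)).2
    linarith)
  have h2 := this.const_mul (2 * M ^ p)
  refine IntegrableOn.congr_fun h2 ?_ measurableSet_Ioi
  intro t ht
  have : M ^ (-p) * M ^ p = 1 := by rw [← Real.rpow_add hM]; simp
  simp only
  linear_combination (t * φ t) * this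

lemma kf_le {n : ℕ} {Φ : ℝ → ℝ} (hpos : ∀ t, 0 < t → 0 ≤ Φ t)
    (h0 : IntegrableOn (fun t => t ^ (n + 1) * Φ t) (Ioc 0 1))
    (hi : IntegrableOn (fun t => t * Φ t) (Ioi 1)) {r : ℝ} (hr : 0 < r) :
    kf n Φ r ≤ (∫ t in Ioc (0:ℝ) 1, t ^ (n + 1) * Φ t) / n * (r ^ n)⁻¹ +
      (∫ t in Ioi (1:ℝ), t * Φ t) / n := by
  have hP0 : 0 ≤ ∫ t in Ioc (0:ℝ) 1, t ^ (n + 1) * Φ t :=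
    setIntegral_nonneg measurableSet_Ioc fun t ht =>
      mul_nonneg (pow_nonneg ht.1.le _) (hpos t ht.1)
  have hQ0 : 0 ≤ ∫ t in Ioi (1:ℝ), t * Φ t :=
    setIntegral_nonneg measurableSet_Ioi fun t ht => by
      have ht0 : (0:ℝ) < t := lt_trans one_pos ht
      exact mul_nonneg ht0.le (hpos t ht0)
  have hr' : 0 ≤ (r ^ n)⁻¹ := by positivity
  have key : Qf Φ r - (r ^ n)⁻¹ * Pf n Φ r ≤
      (∫ t in Ioc (0:ℝ) 1, t ^ (n + 1) * Φ t) * (r ^ n)⁻¹ + ∫ t in Ioi (1:ℝ), t * Φ t := by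
    rcases le_total 1 r with h | h
    · have hP : 0 ≤ Pf n Φ r := intervalIntegral.integral_nonneg h fun t ht => by
        have ht0 : (0:ℝ) < t := lt_of_lt_of_le one_pos ht.1
        exact mul_nonneg (pow_nonneg ht0.le _) (hpos t ht0)
      have hQ : Qf Φ r ≤ ∫ t in Ioi (1:ℝ), t * Φ t := by
        unfold Qf
        rw [intervalIntegral.integral_of_le h]
        apply setIntegral_mono_set hi
        · filter_upwards [ae_restrict_mem measurableSet_Ioi] with t ht
          have ht0 : (0:ℝ) < t := lt_trans one_pos ht
          exact mul_nonneg ht0.le (hpos t ht0)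
        · exact Ioc_subset_Ioi_self.eventuallyLE
      have h1 := mul_nonneg hr' hP
      have h2 := mul_nonneg hP0 hr'
      linarith
    · have hQ : Qf Φ r ≤ 0 := by
        unfold Qf
        rw [intervalIntegral.integral_symm]
        have : 0 ≤ ∫ t in r..1, t * Φ t := intervalIntegral.integral_nonneg h fun t ht => by
          have ht0 : (0:ℝ) < t := lt_of_lt_of_le hr ht.1
          exact mul_nonneg ht0.le (hpos t ht0)
        linarith
      have hP : -Pf n Φ r ≤ ∫ t in Ioc (0:ℝ) 1, t ^ (n + 1) * Φ t := by
        unfold Pf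
        rw [intervalIntegral.integral_symm, neg_neg, intervalIntegral.integral_of_le h]
        apply setIntegral_mono_set h0
        · filter_upwards [ae_restrict_mem measurableSet_Ioc] with t ht
          exact mul_nonneg (pow_nonneg ht.1.le _) (hpos t ht.1)
        · exact (Ioc_subset_Ioc_left hr.le).eventuallyLE
      have h1 := mul_le_mul_of_nonneg_left hP hr'
      linarith
  unfold kf
  calc _ ≤ ((∫ t in Ioc (0:ℝ) 1, t ^ (n + 1) * Φ t) * (r ^ n)⁻¹ + ∫ t in Ioi (1:ℝ), t * Φ t) / n :=
        div_le_div_of_nonneg_right key (Nat.cast_nonneg n)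
    _ = _ := by ring

lemma suff {n : ℕ} (hn : 1 ≤ n) (K : Set (EuclideanSpace ℝ (Fin (n + 2))))
    (hKfin : K.Finite) (hKne : K.Nonempty) (p : ℝ) (hp : 0 < p) (φ : ℝ → ℝ)
    (hφ : ContinuousOn φ (Ioi 0)) (hφpos : ∀ r : ℝ, 0 < r → 0 < φ r)
    (hi : IntegrableOn (fun t => t * φ t) (Ioi 1))
    (h0 : IntegrableOn (fun t => t ^ (n + 1) * (φ t * t ^ (p * n))) (Ioc 0 1)) :
    ∃ u : EuclideanSpace ℝ (Fin (n + 2)) → ℝ, ContDiffOn ℝ 2 u Kᶜ ∧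
        ∀ x ∈ Kᶜ, 0 < u x ∧ φ (infDist x K) * u x ^ (-p) ≤ -laplacian u x := by
  have hpn : 0 ≤ p * n := by positivity
  have hrp : ContinuousOn (fun t : ℝ => t ^ (p * n)) (Ioi 0) :=
    continuousOn_id.rpow_const fun t ht => Or.inl (ne_of_gt ht)
  set Φ : ℝ → ℝ := fun t => φ t * min 1 (t ^ (p * n)) with hΦdef
  have hΦ : ContinuousOn Φ (Ioi 0) := hφ.mul (continuousOn_const.inf hrp)
  have hΦpos : ∀ t, 0 < t → 0 ≤ Φ t := by
    intro t ht
    have h1 := hφpos t ht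
    have h2 : 0 < min 1 (t ^ (p * n)) := lt_min one_pos (by positivity)
    exact (mul_pos h1 h2).le
  have hi' : IntegrableOn (fun t => t * Φ t) (Ioi 1) := by
    refine hi.congr_fun ?_ measurableSet_Ioi
    intro t ht
    have : 1 ≤ t ^ (p * n) := Real.one_le_rpow (le_of_lt ht) hpn
    simp [hΦdef, min_eq_left this]
  have h0' : IntegrableOn (fun t => t ^ (n + 1) * Φ t) (Ioc 0 1) := by
    refine h0.congr_fun ?_ measurableSet_Ioc
    intro t ht
    have : t ^ (p * n) ≤ 1 := Real.rpow_le_one ht.1.le ht.2 hpn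
    simp [hΦdef, min_eq_right this]
  set P0 := ∫ t in Ioc (0:ℝ) 1, t ^ (n + 1) * Φ t
  set Q0 := ∫ t in Ioi (1:ℝ), t * Φ t
  set w : ℝ → ℝ := hf n (1 + Q0 / n) (1 + P0 / n) Φ with hw
  have hwge : ∀ r, 0 < r → 1 + (r ^ n)⁻¹ ≤ w r := by
    intro r hr
    have := kf_le hΦpos h0' hi' hr
    rw [hw]
    unfold hf
    linarith
  have hne : ∀ x ∈ Kᶜ, ∀ a ∈ hKfin.toFinset, x ≠ a := by
    rintro x hx a ha rfl
    exact hx (hKfin.mem_toFinset.1 ha)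
  refine ⟨fun x => ∑ a ∈ hKfin.toFinset, w ‖x - a‖, ?_, ?_⟩
  · apply ContDiffOn.sum
    intro a ha x hx
    exact (contDiffAt_hf hn _ _ hΦ (hne x hx a ha)).contDiffWithinAt
  · intro x hx
    have hnp : ∀ a ∈ hKfin.toFinset, 0 < ‖x - a‖ := fun a ha =>
      norm_pos_iff.2 (sub_ne_zero.2 (hne x hx a ha))
    have hlap : laplacian (fun x => ∑ a ∈ hKfin.toFinset, w ‖x - a‖) x
        = ∑ a ∈ hKfin.toFinset, -Φ ‖x - a‖ := by
      rw [lap_sum (f := fun a x => w ‖x - a‖)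
        fun a ha => contDiffAt_hf hn _ _ hΦ (hne x hx a ha)]
      exact Finset.sum_congr rfl fun a ha => lap_hf hn _ _ hΦ (hne x hx a ha)
    obtain ⟨a, haK, had⟩ := hKfin.isCompact.exists_infDist_eq_dist hKne x
    have ha := hKfin.mem_toFinset.2 haK
    rw [dist_eq_norm] at had
    have hr := hnp a ha
    have hwnn : ∀ b ∈ hKfin.toFinset, 0 ≤ w ‖x - b‖ := by
      intro b hb
      have := hwge _ (hnp b hb)
      have h2 := hnp b hb
      have : 0 ≤ (‖x - b‖ ^ n)⁻¹ := by positivity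
      linarith
    have hu := (hwge _ hr).trans (Finset.single_le_sum hwnn ha)
    have hrn : 0 < (‖x - a‖ ^ n)⁻¹ := by positivity
    simp only at hu ⊢
    rw [hlap, had]
    set U := ∑ a ∈ hKfin.toFinset, w ‖x - a‖
    refine ⟨by linarith, ?_⟩
    have hU1 : U ^ (-p) ≤ 1 := Real.rpow_le_one_of_one_le_of_nonpos (by linarith) (by linarith)
    have hU2 : U ^ (-p) ≤ ‖x - a‖ ^ (p * n) := by
      have h7 : U ^ (-p) ≤ ((‖x - a‖ ^ n)⁻¹) ^ (-p) :=
        Real.rpow_le_rpow_of_nonpos hrn (by linarith) (by linarith)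
      rwa [inv_pow_rpow hr] at h7
    have h1 : φ ‖x - a‖ * U ^ (-p) ≤ Φ ‖x - a‖ :=
      mul_le_mul_of_nonneg_left (le_min hU1 hU2) (hφpos _ hr).le
    rw [Finset.sum_neg_distrib, neg_neg]
    exact h1.trans (Finset.single_le_sum (f := fun b => Φ ‖x - b‖)
      (fun b hb => hΦpos _ (hnp b hb)) ha)

theorem statement_11 {N : ℕ} (hN : 3 ≤ N) (K : Set (EuclideanSpace ℝ (Fin N)))
    (hKfin : K.Finite) (hKne : K.Nonempty) (p : ℝ) (hp : 0 < p)
    (γ : NNReal) (hγ0 : 0 < γ) (hγ1 : γ < 1) (φ : ℝ → ℝ)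
    (hφpos : ∀ r : ℝ, 0 < r → 0 < φ r)
    (hφhold : ∀ s : Set ℝ, IsCompact s → s ⊆ Ioi (0:ℝ) → ∃ C : NNReal, HolderOnWith C γ φ s)
    (hmono : ∃ r₁ : ℝ, 0 < r₁ ∧ (MonotoneOn φ (Ici r₁) ∨ AntitoneOn φ (Ici r₁))) :
    (∃ u : EuclideanSpace ℝ (Fin N) → ℝ,
        ContDiffOn ℝ 2 u Kᶜ ∧
        ∀ x ∈ Kᶜ, 0 < u x ∧ φ (infDist x K) * u x ^ (-p) ≤ -laplacian u x) ↔
      (IntegrableOn (fun r : ℝ => r * φ r) (Ioi (1:ℝ)) volume ∧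
        IntegrableOn (fun r : ℝ => r ^ ((1 + p) * ((N:ℝ) - 2) + 1) * φ r)
          (Ioo (0:ℝ) 1) volume) := by
  obtain ⟨n, rfl⟩ : ∃ n, N = n + 2 := ⟨N - 2, by omega⟩
  have hn : 1 ≤ n := by omega
  have hφ : ContinuousOn φ (Ioi 0) := by
    intro r hr
    have hr0 : (0:ℝ) < r := hr
    obtain ⟨C, hC⟩ := hφhold (Icc (r / 2) (2 * r)) isCompact_Icc (by
      intro t ht
      exact lt_of_lt_of_le (by positivity) ht.1)
    have := hC.continuousOn hγ0
    exact (this.continuousAt (Icc_mem_nhds (by linarith) (by linarith))).continuousWithinAt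
  have hexp : IntegrableOn (fun r : ℝ => r ^ ((1 + p) * (((n + 2 : ℕ):ℝ) - 2) + 1) * φ r)
      (Ioo (0:ℝ) 1) volume ↔
      IntegrableOn (fun t => t ^ (n + 1) * (φ t * t ^ (p * n))) (Ioc 0 1) volume := by
    rw [integrableOn_Ioc_iff_integrableOn_Ioo]
    apply integrableOn_congr_fun _ measurableSet_Ioo
    intro t ht
    have h1 : (1 + p) * (((n + 2 : ℕ):ℝ) - 2) + 1 = ((n + 1 : ℕ) : ℝ) + p * n := by
      push_cast; ring
    simp only
    rw [h1, Real.rpow_add ht.1, Real.rpow_natCast]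
    ring
  rw [hexp]
  constructor
  · rintro ⟨u, hu, hux⟩
    obtain ⟨a, ha⟩ := hKne
    have hopen : IsOpen Kᶜ := hKfin.isClosed.isOpen_compl
    have hcd : ∀ x ∈ Kᶜ, ContDiffAt ℝ 2 u x ∧ 0 < u x := fun x hx =>
      ⟨hu.contDiffAt (hopen.mem_nhds hx), (hux x hx).1⟩
    constructor
    · obtain ⟨r₁, hr₁, hmono⟩ := hmono
      obtain ⟨R, hR⟩ := hKfin.isBounded.subset_closedBall a
      have hR0 : 0 ≤ R := by
        have := hR ha
        simpa using this
      have hinf : ∀ x, R + r₁ ≤ ‖x - a‖ → r₁ ≤ infDist x K := by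
        intro x hx
        rw [le_infDist ⟨a, ha⟩]
        intro b hb
        have h1 : dist b a ≤ R := hR hb
        have h2 := dist_triangle x b a
        rw [dist_eq_norm x a] at h2
        linarith
      have hmem : ∀ x, R + r₁ ≤ ‖x - a‖ → x ∈ Kᶜ := by
        intro x hx hxK
        have := hinf x hx
        rw [infDist_zero_of_mem hxK] at this
        linarith
      rcases hmono with hm | hm
      · exfalso
        have := nec_inf hn (u := u) (a := a) (ρ := R + r₁) (by linarith) hp (φ := fun _ => φ r₁)
          continuousOn_const (fun _ _ => hφpos _ hr₁) (fun x hx => hcd x (hmem x hx)) (by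
            intro x hx
            have h1 := hux x (hmem x hx)
            have h2 : φ r₁ ≤ φ (infDist x K) := hm self_mem_Ici (hinf x hx) (hinf x hx)
            have h3 : 0 ≤ u x ^ (-p) := Real.rpow_nonneg h1.1.le _
            exact (mul_le_mul_of_nonneg_right h2 h3).trans h1.2)
        have h4 : IntegrableOn (fun t : ℝ => t ^ (1:ℝ)) (Ioi 1) := by
          refine IntegrableOn.congr_fun (this.mul_const (φ r₁)⁻¹) ?_ measurableSet_Ioi
          intro t _
          have := (hφpos _ hr₁).ne'
          simp only [Real.rpow_one]
          field_simp
        rw [integrableOn_Ioi_rpow_iff one_pos] at h4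
        linarith
      · exact nec_inf hn (u := u) (a := a) (ρ := R + r₁) (by linarith) hp hφ hφpos
          (fun x hx => hcd x (hmem x hx)) (by
            intro x hx
            have h1 := hux x (hmem x hx)
            have h5 : infDist x K ≤ ‖x - a‖ := by
              rw [← dist_eq_norm]; exact infDist_le_dist_of_mem ha
            have h2 : φ ‖x - a‖ ≤ φ (infDist x K) :=
              hm (hinf x hx) ((hinf x hx).trans h5) h5
            have h3 : 0 ≤ u x ^ (-p) := Real.rpow_nonneg h1.1.le _
            exact (mul_le_mul_of_nonneg_right h2 h3).trans h1.2)
    · have hcl : IsClosed (K \ {a}) := (hKfin.subset sdiff_subset).isClosed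
      obtain ⟨ε, hε, hball⟩ := Metric.isOpen_iff.1 hcl.isOpen_compl a (by simp)
      have hinf : ∀ x, ‖x - a‖ ≤ ε / 2 → infDist x K = ‖x - a‖ := by
        intro x hx
        apply le_antisymm
        · rw [← dist_eq_norm]; exact infDist_le_dist_of_mem ha
        · rw [le_infDist ⟨a, ha⟩]
          intro b hb
          by_cases hba : b = a
          · rw [hba, dist_eq_norm]
          · have h1 : ε ≤ dist b a := by
              by_contra hlt
              push Not at hlt
              exact hball (mem_ball.2 hlt) ⟨hb, hba⟩
            have h2 := dist_triangle b x a
            rw [dist_eq_norm x a, dist_comm b x] at h2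
            linarith
      have hmem : ∀ x, 0 < ‖x - a‖ → ‖x - a‖ ≤ ε / 2 → x ∈ Kᶜ := by
        intro x hx hx2 hxK
        have := hinf x hx2
        rw [infDist_zero_of_mem hxK] at this
        linarith
      exact nec_zero hn (u := u) (a := a) (ρ := ε / 2) (by positivity) hp hφ hφpos
        (fun x h1 h2 => hcd x (hmem x h1 h2)) (fun x h1 h2 => by
          have := (hux x (hmem x h1 h2)).2
          rwa [hinf x h2] at this)
  · rintro ⟨hi, h0⟩
    exact suff hn K hKfin hKne p hp φ hφ hφpos hi h0
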